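/- Let n ≥ 2 and let α_1, …, α_n be nonzero real numbers with α_1² + ⋯ + α_n² = 1. Let f : ℝ → ℂ be a continuous positive definite function with f(0) = 1 satisfying f(s) = f(α_1 s)·f(α_2 s)⋯f(α_n s) for all s ∈ ℝ. Then there exist σ ≥ 0 and β ∈ ℝ such that f(s) = exp(−σ s² + iβs) for all s ∈ ℝ. -/

import Mathlib

/-!
The angle `arccos ‖f‖` is subadditive, by Krein's inequality. Fekete's argument therefore gives a
limit, possibly infinite, of `(arccos ‖f t‖)² / t²`, hence of `-log ‖f t‖ / t²`, as `t → 0`. Since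
`|αⱼ| < 1` and `∑ αⱼ² = 1`, iterating the functional equation transports quadratic behaviour at `0`
to the whole line: the limit is finite and `-log ‖f s‖ = σ s²` exactly. For a Gaussian modulus
Krein's inequality is sharp to leading order, so the phase `p = f / ‖f‖` satisfies
`p ((s + t) l) - p (s l) p (t l) = o(l²)`; the same transport makes this difference vanish, and `p`
is a continuous character of `ℝ`.
-/

open scoped BigOperators

/-- A function `f : G → ℂ` on an additive abelian group is positive definite if every
quadratic form `∑ cᵢ c̄ⱼ f(yᵢ - yⱼ)` is a nonnegative real number. -/
def IsPositiveDefinite {G : Type*} [AddCommGroup G] (f : G → ℂ) : Prop :=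
  ∀ (n : ℕ) (y : Fin n → G) (c : Fin n → ℂ),
    ∃ t : ℝ, 0 ≤ t ∧ ∑ i, ∑ j, c i * (starRingEnd ℂ) (c j) * f (y i - y j) = (t : ℂ)

open Filter Topology Asymptotics

namespace IsPositiveDefinite

open scoped ComplexConjugate ComplexOrder

variable {G : Type*} [AddCommGroup G] {f : G → ℂ}

theorem posSemidef (hf : IsPositiveDefinite f) {n : ℕ} (y : Fin n → G) :
    (Matrix.of fun i j ↦ f (y i - y j)).PosSemidef := by
  rw [← Matrix.isPositive_toEuclideanLin_iff, LinearMap.isPositive_iff_complex]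
  intro x
  obtain ⟨t, ht, hsum⟩ := hf n y (fun i ↦ conj (x i))
  have hinner : inner ℂ (Matrix.toEuclideanLin (Matrix.of fun i j ↦ f (y i - y j)) x) x = t := by
    rw [← inner_conj_symm, ← Complex.conj_ofReal t, ← hsum]
    simp only [PiLp.inner_apply, Matrix.ofLp_toLpLin, Matrix.toLin'_apply, Matrix.mulVec,
      dotProduct, Matrix.of_apply, RCLike.inner_apply, Finset.sum_mul, map_sum, map_mul,
      Complex.conj_conj]
    exact Finset.sum_congr rfl fun i _ ↦ Finset.sum_congr rfl fun j _ ↦ by ring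
  simp [hinner, ht]

theorem map_neg (hf : IsPositiveDefinite f) (s : G) : f (-s) = conj (f s) := by
  simpa using ((hf.posSemidef ![0, s]).isHermitian.apply 0 1).symm

theorem norm_map_neg (hf : IsPositiveDefinite f) (s : G) : ‖f (-s)‖ = ‖f s‖ := by
  rw [hf.map_neg, RCLike.norm_conj]

theorem norm_le_one (hf : IsPositiveDefinite f) (hf0 : f 0 = 1) (s : G) : ‖f s‖ ≤ 1 := by
  have hdet := (hf.posSemidef ![0, s]).det_nonneg
  simp only [Matrix.det_fin_two, Matrix.of_apply, Matrix.cons_val_zero, Matrix.cons_val_one,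
    sub_self, zero_sub, sub_zero, hf0, hf.map_neg, Complex.conj_mul', mul_one] at hdet
  have hsq : ‖f s‖ ^ 2 ≤ 1 := by exact_mod_cast sub_nonneg.1 hdet
  exact (sq_le_one_iff₀ (norm_nonneg _)).1 hsq

/-- Krein's inequality: it is the nonnegativity of the determinant of the Gram matrix
`f (yᵢ - yⱼ)` at the points `0`, `s`, `-t`. -/
theorem norm_map_add_sub_mul_sq_le (hf : IsPositiveDefinite f) (hf0 : f 0 = 1) (s t : G) :
    ‖f (s + t) - f s * f t‖ ^ 2 ≤ (1 - ‖f s‖ ^ 2) * (1 - ‖f t‖ ^ 2) := by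
  have hdet := (hf.posSemidef ![0, s, -t]).det_nonneg
  have hconj : f (-t - s) = conj (f (s + t)) := by rw [← hf.map_neg, neg_add']; congr 1; abel
  have hexpand : (Matrix.of fun i j ↦ f (![0, s, -t] i - ![0, s, -t] j)).det =
      (((1 - ‖f s‖ ^ 2) * (1 - ‖f t‖ ^ 2) - ‖f (s + t) - f s * f t‖ ^ 2 : ℝ) : ℂ) := by
    push_cast
    simp only [Matrix.det_fin_three, Matrix.of_apply, Matrix.cons_val_zero, Matrix.cons_val_one,
      Matrix.cons_val, sub_self, sub_neg_eq_add, zero_sub, sub_zero, zero_add, hf0, hf.map_neg,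
      hconj, map_sub, map_mul, ← Complex.conj_mul']
    ring
  rw [hexpand] at hdet
  exact sub_nonneg.1 (by exact_mod_cast hdet)

end IsPositiveDefinite

/-- The angle between the lines `ℂ ξ` and `ℂ U_s ξ` when `f s = ⟪ξ, U_s ξ⟫` for a unit vector `ξ`
and a unitary representation `U`. As the Fubini–Study distance from `ξ` to `U_s ξ` it is subadditive
in `s`, which turns the bound on `‖f‖` coming from Krein's inequality into a triangle inequality. -/
noncomputable def rayAngle {G : Type*} (f : G → ℂ) (s : G) : ℝ :=
  Real.arccos ‖f s‖

namespace IsPositiveDefinite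

variable {G : Type*} [AddCommGroup G] {f : G → ℂ}

theorem cos_rayAngle (hf : IsPositiveDefinite f) (hf0 : f 0 = 1) (s : G) :
    Real.cos (rayAngle f s) = ‖f s‖ :=
  Real.cos_arccos (by linarith [norm_nonneg (f s)]) (hf.norm_le_one hf0 s)

theorem rayAngle_neg (hf : IsPositiveDefinite f) (s : G) : rayAngle f (-s) = rayAngle f s := by
  rw [rayAngle, hf.norm_map_neg, rayAngle]

theorem rayAngle_add_le (hf : IsPositiveDefinite f) (hf0 : f 0 = 1) (s t : G) :
    rayAngle f (s + t) ≤ rayAngle f s + rayAngle f t := by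
  have hkrein : ‖f (s + t) - f s * f t‖ ≤ Real.sin (rayAngle f s) * Real.sin (rayAngle f t) := by
    rw [rayAngle, rayAngle, Real.sin_arccos, Real.sin_arccos,
      ← Real.sqrt_mul (by simp [hf.norm_le_one hf0 s])]
    exact Real.le_sqrt_of_sq_le (hf.norm_map_add_sub_mul_sq_le hf0 s t)
  have hcos : Real.cos (rayAngle f s + rayAngle f t) ≤ ‖f (s + t)‖ := by
    rw [Real.cos_add, hf.cos_rayAngle hf0, hf.cos_rayAngle hf0, ← norm_mul, sub_le_iff_le_add]
    calc ‖f s * f t‖ ≤ ‖f (s + t)‖ + ‖f s * f t - f (s + t)‖ := norm_le_norm_add_norm_sub' _ _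
      _ ≤ _ := by rw [norm_sub_rev]; gcongr
  have hacute (u : G) : rayAngle f u ≤ Real.pi / 2 :=
    Real.arccos_le_pi_div_two.2 (norm_nonneg _)
  calc rayAngle f (s + t) ≤ Real.arccos (Real.cos (rayAngle f s + rayAngle f t)) :=
        Real.antitone_arccos hcos
    _ = rayAngle f s + rayAngle f t :=
        Real.arccos_cos (add_nonneg (Real.arccos_nonneg _) (Real.arccos_nonneg _))
          (by linarith [hacute s, hacute t])

end IsPositiveDefinite

section Contraction

variable {ι V : Type*} [SeminormedAddCommGroup V] [NormedSpace ℝ V] {α : ι → ℝ}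

theorem abs_lt_one_of_sum_sq_eq_one [Fintype ι] [Nontrivial ι] (hα0 : ∀ j, α j ≠ 0)
    (hsum : ∑ j, α j ^ 2 = 1) (j : ι) : |α j| < 1 := by
  obtain ⟨i, hij⟩ := exists_ne j
  rw [← sq_lt_one_iff_abs_lt_one, ← hsum]
  exact Finset.single_lt_sum (f := fun j ↦ α j ^ 2) hij (Finset.mem_univ j) (Finset.mem_univ i)
    (sq_pos_iff.2 (hα0 i)) fun k _ _ ↦ sq_nonneg (α k)

theorem forall_of_eventually_nhds_zero_of_smul [Finite ι] {P : V → Prop} (hα : ∀ j, |α j| < 1)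
    (hstep : ∀ s, (∀ j, P (α j • s)) → P s) (hzero : ∀ᶠ s in 𝓝 0, P s) (s : V) : P s := by
  have := Fintype.ofFinite ι
  obtain ⟨a, ha0, ha1, hαa⟩ : ∃ a : ℝ, 0 ≤ a ∧ a < 1 ∧ ∀ j, |α j| ≤ a :=
    ⟨(Finset.univ.sup fun j ↦ ‖α j‖₊ : NNReal), NNReal.coe_nonneg _,
      NNReal.coe_lt_one.2 ((Finset.sup_lt_iff one_pos).2 fun j _ ↦ hα j),
      fun j ↦ NNReal.coe_le_coe.2 (Finset.le_sup (f := fun j ↦ ‖α j‖₊) (Finset.mem_univ j))⟩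
  obtain ⟨δ, hδ, hball⟩ := Metric.eventually_nhds_iff.1 hzero
  have hpow (k : ℕ) : ∀ t : V, a ^ k * ‖t‖ < δ → P t := by
    induction k with
    | zero => exact fun t ht ↦ hball (by simpa using ht)
    | succ k ih =>
      refine fun t ht ↦ hstep t fun j ↦ ih _ (lt_of_le_of_lt ?_ ht)
      rw [norm_smul, Real.norm_eq_abs, pow_succ, mul_assoc]
      gcongr
      exact hαa j
  have hlim : Tendsto (fun k : ℕ ↦ a ^ k * ‖s‖) atTop (𝓝 0) := by
    simpa using (tendsto_pow_atTop_nhds_zero_of_lt_one ha0 ha1).mul_const ‖s‖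
  obtain ⟨k, hk⟩ := (hlim.eventually_lt_const hδ).exists
  exact hpow k s hk

theorem eq_zero_of_norm_le_sum_of_isLittleO [Fintype ι] {F : Type*} [NormedAddCommGroup F]
    {E : V → F} (hα : ∀ j, |α j| < 1) (hsum : ∑ j, α j ^ 2 = 1)
    (hE : ∀ s, ‖E s‖ ≤ ∑ j, ‖E (α j • s)‖) (hzero : E =o[𝓝 0] fun s ↦ ‖s‖ ^ 2) (s : V) :
    E s = 0 := by
  have hbound (ε : ℝ) (hε : 0 < ε) (s : V) : ‖E s‖ ≤ ε * ‖s‖ ^ 2 := by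
    refine forall_of_eventually_nhds_zero_of_smul (P := fun s ↦ ‖E s‖ ≤ ε * ‖s‖ ^ 2) hα
      (fun s hs ↦ ?_) (by simpa using hzero.def hε) s
    calc ‖E s‖ ≤ ∑ j, ‖E (α j • s)‖ := hE s
      _ ≤ ∑ j, ε * ‖α j • s‖ ^ 2 := Finset.sum_le_sum fun j _ ↦ hs j
      _ = ε * ‖s‖ ^ 2 * ∑ j, α j ^ 2 := by
        rw [Finset.mul_sum]
        refine Finset.sum_congr rfl fun j _ ↦ ?_
        rw [norm_smul, Real.norm_eq_abs, mul_pow, sq_abs]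
        ring
      _ = ε * ‖s‖ ^ 2 := by rw [hsum, mul_one]
  have hlim : Tendsto (fun ε : ℝ ↦ ε * ‖s‖ ^ 2) (𝓝[>] 0) (𝓝 0) := by
    simpa using (tendsto_nhdsWithin_of_tendsto_nhds (tendsto_id (x := 𝓝 (0 : ℝ)))).mul_const
      (‖s‖ ^ 2)
  exact norm_le_zero_iff.1 <| ge_of_tendsto hlim <|
    eventually_mem_nhdsWithin.mono fun ε hε ↦ hbound ε hε s

end Contraction

section Subadditive

variable {S : ℝ → ℝ}

theorem eventually_lt_div_of_subadditive (hS : ∀ s t, S (s + t) ≤ S s + S t)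
    (hS0 : Tendsto S (𝓝 0) (𝓝 0)) {s c : ℝ} (hs : 0 < s) (hc : c < S s / s) :
    ∀ᶠ t in 𝓝[>] 0, c < S t / t := by
  have hmul (k : ℕ) (t : ℝ) : S (k * t) ≤ k * S t := by
    induction k with
    | zero => simp [tendsto_nhds_unique (tendsto_pure_nhds S 0) (hS0.mono_left (pure_le_nhds 0))]
    | succ k ih =>
      rw [Nat.cast_succ, add_one_mul, add_one_mul]
      exact (hS _ _).trans (by gcongr)
  have hfloor : Tendsto (fun t : ℝ ↦ ⌊s / t⌋₊ * t) (𝓝[>] 0) (𝓝 s) := by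
    simpa [Function.comp_def, div_eq_mul_inv] using
      (tendsto_nat_floor_mul_div_atTop hs.le).comp tendsto_inv_nhdsGT_zero
  have hrem : Tendsto (fun t ↦ S (s - ⌊s / t⌋₊ * t)) (𝓝[>] 0) (𝓝 0) :=
    hS0.comp (by simpa using hfloor.const_sub s)
  have hlt : ∀ᶠ t in 𝓝[>] 0, c * (⌊s / t⌋₊ * t) + S (s - ⌊s / t⌋₊ * t) < S s :=
    ((hfloor.const_mul c).add hrem).eventually_lt_const (by simpa using (lt_div_iff₀ hs).1 hc)
  filter_upwards [hlt, self_mem_nhdsWithin] with t ht htpos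
  rw [lt_div_iff₀ htpos]
  by_contra! hle
  have hsplit : S s ≤ S (⌊s / t⌋₊ * t) + S (s - ⌊s / t⌋₊ * t) := by
    simpa using hS (⌊s / t⌋₊ * t) (s - ⌊s / t⌋₊ * t)
  have hscale : ⌊s / t⌋₊ * S t ≤ ⌊s / t⌋₊ * (c * t) := by gcongr
  linarith [hmul ⌊s / t⌋₊ t]

/-- A continuous-parameter form of Fekete's lemma. -/
theorem tendsto_div_nhdsGT_zero_of_subadditive (hS : ∀ s t, S (s + t) ≤ S s + S t)
    (hS0 : Tendsto S (𝓝 0) (𝓝 0)) :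
    (∃ L, Tendsto (fun t ↦ S t / t) (𝓝[>] 0) (𝓝 L)) ∨
      Tendsto (fun t ↦ S t / t) (𝓝[>] 0) atTop := by
  by_cases hbdd : BddAbove ((fun t ↦ S t / t) '' Set.Ioi 0)
  · refine .inl ⟨sSup ((fun t ↦ S t / t) '' Set.Ioi 0),
      tendsto_order.2 ⟨fun c hc ↦ ?_, fun c hc ↦ ?_⟩⟩
    · obtain ⟨-, ⟨s, hs, rfl⟩, hlt⟩ :=
        exists_lt_of_lt_csSup (Set.nonempty_Ioi.image fun t ↦ S t / t) hc
      exact eventually_lt_div_of_subadditive hS hS0 hs hlt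
    · filter_upwards [self_mem_nhdsWithin] with t ht
      exact (le_csSup hbdd (Set.mem_image_of_mem _ ht)).trans_lt hc
  · refine .inr (tendsto_atTop.2 fun c ↦ ?_)
    obtain ⟨-, ⟨s, hs, rfl⟩, hlt⟩ := not_bddAbove_iff.1 hbdd c
    exact (eventually_lt_div_of_subadditive hS hS0 hs hlt).mono fun t ht ↦ ht.le

end Subadditive

section Quadratic

variable {ι : Type*} [Fintype ι] {α : ι → ℝ} {g S : ℝ → ℝ}

theorem tendsto_sq_div_sq_nhdsNE_zero_of_subadditive (hS : ∀ s t, S (s + t) ≤ S s + S t)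
    (hS0 : Tendsto S (𝓝 0) (𝓝 0)) (heven : Function.Even S) :
    (∃ L, Tendsto (fun t ↦ S t ^ 2 / t ^ 2) (𝓝[≠] 0) (𝓝 L)) ∨
      Tendsto (fun t ↦ S t ^ 2 / t ^ 2) (𝓝[≠] 0) atTop := by
  have hsq (t : ℝ) : S t ^ 2 / t ^ 2 = (S |t| / |t|) ^ 2 := by
    rw [div_pow, sq_abs, abs_eq_max_neg]
    rcases max_choice t (-t) with h | h <;> simp only [h, heven t]
  simp only [hsq]
  exact (tendsto_div_nhdsGT_zero_of_subadditive hS hS0).imp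
    (fun ⟨L, hL⟩ ↦ ⟨L ^ 2, (hL.comp tendsto_abs_nhdsNE_zero).pow 2⟩)
    fun h ↦ (tendsto_pow_atTop two_ne_zero).comp (h.comp tendsto_abs_nhdsNE_zero)

theorem eq_mul_sq_of_tendsto_div_sq (hα : ∀ j, |α j| < 1) (hsum : ∑ j, α j ^ 2 = 1)
    (hg : ∀ s, g s = ∑ j, g (α j * s)) (hg0 : g 0 = 0) {L : ℝ}
    (hL : Tendsto (fun t ↦ g t / t ^ 2) (𝓝[≠] 0) (𝓝 L)) (s : ℝ) : g s = L * s ^ 2 := by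
  rw [← sub_eq_zero]
  refine eq_zero_of_norm_le_sum_of_isLittleO (E := fun s ↦ g s - L * s ^ 2) hα hsum
    (fun s ↦ ?_) ?_ s
  · calc ‖g s - L * s ^ 2‖ = ‖∑ j, (g (α j * s) - L * (α j * s) ^ 2)‖ := by
          simp only [Finset.sum_sub_distrib, ← hg, mul_pow, ← Finset.mul_sum, ← Finset.sum_mul,
            hsum, one_mul]
      _ ≤ ∑ j, ‖g (α j * s) - L * (α j * s) ^ 2‖ := norm_sum_le _ _
  · have hne : (fun s ↦ g s - L * s ^ 2) =o[𝓝[≠] 0] fun s ↦ ‖s‖ ^ 2 := by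
      have hsq : ∀ᶠ t : ℝ in 𝓝[≠] 0, t ^ 2 ≠ 0 :=
        eventually_mem_nhdsWithin.mono fun t ht ↦ pow_ne_zero 2 ht
      simp only [Real.norm_eq_abs, sq_abs]
      refine (isLittleO_iff_tendsto' (hsq.mono fun t ht h ↦ absurd h ht)).2 ?_
      refine Tendsto.congr' (hsq.mono fun t ht ↦ ?_) (by simpa using hL.sub_const L)
      change _ = (g t - L * t ^ 2) / t ^ 2
      rw [sub_div, mul_div_cancel_right₀ _ ht]
    rw [← nhdsNE_sup_pure]
    exact hne.sup (isLittleO_pure.2 (by simp [hg0]))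

theorem not_tendsto_div_sq_atTop (hα : ∀ j, |α j| < 1) (hsum : ∑ j, α j ^ 2 = 1)
    (hg : ∀ s, g s = ∑ j, g (α j * s)) (hg0 : g 0 = 0) :
    ¬ Tendsto (fun t ↦ g t / t ^ 2) (𝓝[≠] 0) atTop := by
  intro htop
  have hnear : ∀ᶠ t in 𝓝 0, (g 1 + 1) * t ^ 2 ≤ g t := by
    rw [← nhdsNE_sup_pure, eventually_sup]
    refine ⟨?_, by simp [hg0]⟩
    filter_upwards [htop.eventually_ge_atTop (g 1 + 1), self_mem_nhdsWithin] with t ht htne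
    exact (le_div_iff₀ (sq_pos_iff.2 htne)).1 ht
  have hone := forall_of_eventually_nhds_zero_of_smul hα (fun s hs ↦ ?_) hnear 1
  · linarith
  · calc (g 1 + 1) * s ^ 2 = ∑ j, (g 1 + 1) * (α j • s) ^ 2 := by
          simp only [smul_eq_mul, mul_pow, ← Finset.mul_sum, ← Finset.sum_mul, hsum, one_mul]
      _ ≤ ∑ j, g (α j • s) := Finset.sum_le_sum fun j _ ↦ hs j
      _ = g s := (hg s).symm

theorem exists_eq_mul_sq_of_isEquivalent_sq (hα : ∀ j, |α j| < 1) (hsum : ∑ j, α j ^ 2 = 1)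
    (hg : ∀ s, g s = ∑ j, g (α j * s)) (hg0 : g 0 = 0) (hS : ∀ s t, S (s + t) ≤ S s + S t)
    (hS0 : Tendsto S (𝓝 0) (𝓝 0)) (heven : Function.Even S)
    (hgS : g ~[𝓝 0] fun t ↦ S t ^ 2) : ∃ L, ∀ s, g s = L * s ^ 2 := by
  have hdiv : (fun t ↦ S t ^ 2 / t ^ 2) ~[𝓝[≠] 0] fun t ↦ g t / t ^ 2 :=
    (hgS.symm.mono nhdsWithin_le_nhds).div .refl
  rcases tendsto_sq_div_sq_nhdsNE_zero_of_subadditive hS hS0 heven with ⟨L, hL⟩ | htop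
  · exact ⟨L, eq_mul_sq_of_tendsto_div_sq hα hsum hg hg0 (hdiv.tendsto_nhds hL)⟩
  · exact absurd (hdiv.tendsto_atTop htop) (not_tendsto_div_sq_atTop hα hsum hg hg0)

end Quadratic

theorem isEquivalent_neg_two_mul_log_cos :
    (fun x ↦ -2 * Real.log (Real.cos x)) ~[𝓝 0] fun x ↦ x ^ 2 := by
  have hlog : Real.log ~[𝓝 1] fun y ↦ y - 1 := by
    simpa [IsEquivalent, Pi.sub_def] using (Real.hasDerivAt_log one_ne_zero).isLittleO
  have hcos : Tendsto (fun x ↦ Real.cos x ^ 2) (𝓝 0) (𝓝 1) :=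
    (Real.continuous_cos.pow 2).tendsto' 0 1 (by simp)
  calc (fun x ↦ -2 * Real.log (Real.cos x)) = fun x ↦ -Real.log (Real.cos x ^ 2) := by simp
    _ ~[𝓝 0] fun x ↦ -(Real.cos x ^ 2 - 1) := (hlog.comp_tendsto hcos).neg
    _ = fun x ↦ Real.sin x ^ 2 := by simp only [neg_sub, Real.sin_sq]
    _ ~[𝓝 0] fun x ↦ x ^ 2 := Real.isEquivalent_sin.pow 2

section Modulus

variable {ι : Type*} [Fintype ι] {α : ι → ℝ}

theorem ne_zero_of_eq_prod {V R : Type*} [SeminormedAddCommGroup V] [NormedSpace ℝ V]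
    [CommMonoidWithZero R] [NoZeroDivisors R] [Nontrivial R] [TopologicalSpace R] [T1Space R]
    {f : V → R} (hα : ∀ j, |α j| < 1) (hcont : ContinuousAt f 0) (hf0 : f 0 = 1)
    (heq : ∀ s, f s = ∏ j, f (α j • s)) (s : V) : f s ≠ 0 :=
  forall_of_eventually_nhds_zero_of_smul hα
    (fun s hs ↦ by rw [heq s]; exact Finset.prod_ne_zero_iff.2 fun j _ ↦ hs j)
    (hcont.eventually_ne (by rw [hf0]; exact one_ne_zero)) s

theorem IsPositiveDefinite.exists_norm_eq_exp_neg_mul_sq {f : ℝ → ℂ} (hpd : IsPositiveDefinite f)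
    (hα : ∀ j, |α j| < 1) (hsum : ∑ j, α j ^ 2 = 1) (hcont : ContinuousAt f 0) (hf0 : f 0 = 1)
    (heq : ∀ s, f s = ∏ j, f (α j * s)) : ∃ σ ≥ 0, ∀ s, ‖f s‖ = Real.exp (-(σ * s ^ 2)) := by
  have hne : ∀ s, ‖f s‖ ≠ 0 := fun s ↦ norm_ne_zero_iff.2 (ne_zero_of_eq_prod hα hcont hf0 heq s)
  have hangle : Tendsto (rayAngle f) (𝓝 0) (𝓝 0) := by
    have hlim := (Real.continuous_arccos.tendsto ‖f 0‖).comp hcont.norm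
    rwa [hf0, norm_one, Real.arccos_one] at hlim
  have hlog (s : ℝ) : -2 * Real.log ‖f s‖ = ∑ j, -2 * Real.log ‖f (α j * s)‖ := by
    rw [← Finset.mul_sum, ← Real.log_prod fun j _ ↦ hne _, ← norm_prod, ← heq]
  have hequiv : (fun s ↦ -2 * Real.log ‖f s‖) ~[𝓝 0] fun s ↦ rayAngle f s ^ 2 := by
    simpa only [Function.comp_def, hpd.cos_rayAngle hf0] using
      isEquivalent_neg_two_mul_log_cos.comp_tendsto hangle
  obtain ⟨L, hL⟩ := exists_eq_mul_sq_of_isEquivalent_sq hα hsum hlog (by simp [hf0])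
    (hpd.rayAngle_add_le hf0) hangle hpd.rayAngle_neg hequiv
  refine ⟨L / 2, ?_, fun s ↦ ?_⟩
  · have hlog1 : Real.log ‖f 1‖ ≤ 0 := Real.log_nonpos (norm_nonneg _) (hpd.norm_le_one hf0 1)
    linarith [hL 1]
  · rw [← Real.exp_log (norm_pos_iff.2 (norm_ne_zero_iff.1 (hne s)))]
    congr 1
    linarith [hL s]

end Modulus

section Phase

variable {f p : ℝ → ℂ} {σ : ℝ}

theorem norm_exp_neg_smul_sub_exp_smul_sq {E : Type*} [NormedAddCommGroup E]
    [InnerProductSpace ℝ E] {x y : E} (hx : ‖x‖ = 1) (hy : ‖y‖ = 1) (w : ℝ) :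
    ‖Real.exp (-w) • x - Real.exp w • y‖ ^ 2 = ‖x - y‖ ^ 2 + 4 * Real.sinh w ^ 2 := by
  have hexp : Real.exp (-w) * Real.exp w = 1 := by simp [← Real.exp_add]
  simp only [norm_sub_sq_real, norm_smul, Real.norm_eq_abs, Real.abs_exp, hx, hy,
    real_inner_smul_left, real_inner_smul_right, Real.sinh_eq]
  linear_combination (2 - 2 * inner ℝ x y) * hexp

/-- This is Krein's inequality with the common factor `exp (-σ(s² + st + t²))²` divided out. -/
theorem IsPositiveDefinite.norm_phase_add_sub_mul_sq_le
    (hpd : IsPositiveDefinite f) (hf0 : f 0 = 1) (hp : ∀ s, ‖p s‖ = 1)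
    (hfp : ∀ s, f s = Real.exp (-(σ * s ^ 2)) • p s) (s t : ℝ) :
    ‖p (s + t) - p s * p t‖ ^ 2 ≤
      4 * (Real.exp (σ * (s + t) ^ 2) * (Real.sinh (σ * s ^ 2) * Real.sinh (σ * t ^ 2)) -
        Real.sinh (σ * (s * t)) ^ 2) := by
  have hnorm (u : ℝ) : 1 - ‖f u‖ ^ 2 = 2 * Real.exp (-(σ * u ^ 2)) * Real.sinh (σ * u ^ 2) := by
    rw [hfp, norm_smul, hp, Real.norm_eq_abs, Real.abs_exp, Real.sinh_eq, mul_one, Real.exp_neg]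
    field_simp
  have hdiff : f (s + t) - f s * f t = Real.exp (-(σ * (s ^ 2 + s * t + t ^ 2))) •
      (Real.exp (-(σ * (s * t))) • p (s + t) - Real.exp (σ * (s * t)) • (p s * p t)) := by
    rw [hfp, hfp, hfp, smul_sub, smul_smul, smul_smul, smul_mul_smul_comm, ← Real.exp_add,
      ← Real.exp_add, ← Real.exp_add]
    ring_nf
  have hkrein := hpd.norm_map_add_sub_mul_sq_le hf0 s t
  rw [hdiff, norm_smul, mul_pow, norm_exp_neg_smul_sub_exp_smul_sq (hp _) (by simp [hp]),
    Real.norm_eq_abs, Real.abs_exp, hnorm, hnorm] at hkrein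
  have hscale : Real.exp (-(σ * (s ^ 2 + s * t + t ^ 2))) ^ 2 * Real.exp (σ * (s + t) ^ 2) =
      Real.exp (-(σ * s ^ 2)) * Real.exp (-(σ * t ^ 2)) := by
    rw [← Real.exp_nat_mul, ← Real.exp_add, ← Real.exp_add]
    ring_nf
  rw [mul_sub, le_sub_iff_add_le]
  refine le_of_mul_le_mul_left (hkrein.trans_eq ?_)
    (pow_pos (Real.exp_pos (-(σ * (s ^ 2 + s * t + t ^ 2)))) 2)
  linear_combination (-4 * Real.sinh (σ * s ^ 2) * Real.sinh (σ * t ^ 2)) * hscale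

/-- Both terms of the difference are `(σ x y l²)² + o(l⁴)`. -/
theorem isLittleO_exp_mul_sinh_mul_sinh_sub_sinh_sq (σ x y : ℝ) :
    (fun l : ℝ ↦ Real.exp (σ * (x * l + y * l) ^ 2) *
        (Real.sinh (σ * (x * l) ^ 2) * Real.sinh (σ * (y * l) ^ 2)) -
      Real.sinh (σ * (x * l * (y * l))) ^ 2) =o[𝓝 0] fun l ↦ l ^ 4 := by
  have hsinh (a : ℝ) : (fun l : ℝ ↦ Real.sinh (a * l ^ 2)) ~[𝓝 0] fun l ↦ a * l ^ 2 :=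
    Real.isEquivalent_sinh.comp_tendsto (Continuous.tendsto' (by fun_prop) _ _ (by simp))
  have hexp : (fun l : ℝ ↦ Real.exp (σ * (x * l + y * l) ^ 2)) ~[𝓝 0] fun _ ↦ 1 :=
    (isEquivalent_const_iff_tendsto one_ne_zero).2
      (Continuous.tendsto' (by fun_prop) _ _ (by simp))
  have hprod := hexp.mul ((hsinh (σ * x ^ 2)).mul (hsinh (σ * y ^ 2)))
  have hsq := (hsinh (σ * (x * y))).pow 2
  have hsame : ((fun _ ↦ 1) * ((fun l ↦ σ * x ^ 2 * l ^ 2) * fun l ↦ σ * y ^ 2 * l ^ 2) : ℝ → ℝ) =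
      (fun l ↦ σ * (x * y) * l ^ 2) ^ 2 := by
    ext l
    simp only [Pi.mul_apply, Pi.pow_apply]
    ring
  rw [hsame] at hprod
  have hO : ((fun l ↦ σ * (x * y) * l ^ 2) ^ 2) =O[𝓝 0] fun l : ℝ ↦ l ^ 4 := by
    have := (isBigO_refl (fun l : ℝ ↦ l ^ 4) (𝓝 0)).const_mul_left ((σ * (x * y)) ^ 2)
    refine this.congr_left fun l ↦ ?_
    simp only [Pi.pow_apply]
    ring
  refine ((hprod.isLittleO.sub hsq.isLittleO).trans_isBigO hO).congr_left fun l ↦ ?_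
  simp only [Pi.sub_apply, Pi.mul_apply, Pi.pow_apply]
  ring_nf

theorem norm_prod_sub_prod_le {ι R : Type*} [NormedCommRing R] [NormOneClass R] (s : Finset ι)
    {a b : ι → R} (ha : ∀ j ∈ s, ‖a j‖ ≤ 1) (hb : ∀ j ∈ s, ‖b j‖ ≤ 1) :
    ‖∏ j ∈ s, a j - ∏ j ∈ s, b j‖ ≤ ∑ j ∈ s, ‖a j - b j‖ := by
  induction s using Finset.cons_induction with
  | empty => simp
  | cons i s hi ih =>
    rw [Finset.forall_mem_cons] at ha hb
    have hprod : ‖∏ j ∈ s, b j‖ ≤ 1 :=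
      (Finset.norm_prod_le s b).trans (Finset.prod_le_one (fun _ _ ↦ norm_nonneg _) hb.2)
    rw [Finset.prod_cons, Finset.prod_cons, Finset.sum_cons, add_comm]
    calc ‖a i * ∏ j ∈ s, a j - b i * ∏ j ∈ s, b j‖
        = ‖a i * (∏ j ∈ s, a j - ∏ j ∈ s, b j) + (a i - b i) * ∏ j ∈ s, b j‖ := by ring_nf
      _ ≤ 1 * ‖∏ j ∈ s, a j - ∏ j ∈ s, b j‖ + ‖a i - b i‖ * 1 :=
        norm_add_le_of_le ((norm_mul_le _ _).trans (by gcongr; exact ha.1))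
          ((norm_mul_le _ _).trans (by gcongr))
      _ ≤ ∑ j ∈ s, ‖a j - b j‖ + ‖a i - b i‖ := by
        rw [one_mul, mul_one]
        gcongr
        exact ih ha.2 hb.2

theorem IsPositiveDefinite.isLittleO_phase_add_sub_mul
    (hpd : IsPositiveDefinite f) (hf0 : f 0 = 1) (hp : ∀ s, ‖p s‖ = 1)
    (hfp : ∀ s, f s = Real.exp (-(σ * s ^ 2)) • p s) (s t : ℝ) :
    (fun l : ℝ ↦ p (s * l + t * l) - p (s * l) * p (t * l)) =o[𝓝 0] fun l ↦ ‖l‖ ^ 2 := by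
  have hsq : (fun l : ℝ ↦ ‖p (s * l + t * l) - p (s * l) * p (t * l)‖ ^ 2) =o[𝓝 0]
      fun l ↦ l ^ 4 :=
    (IsBigO.of_norm_le fun l ↦ by
      rw [norm_pow, norm_norm]
      exact hpd.norm_phase_add_sub_mul_sq_le hf0 hp hfp (s * l) (t * l)).trans_isLittleO
      ((isLittleO_exp_mul_sinh_mul_sinh_sub_sinh_sq σ s t).const_mul_left 4)
  refine .of_norm_left (.of_pow (n := 2) (hsq.congr_right fun l ↦ ?_) two_ne_zero)
  rw [Pi.pow_apply, Real.norm_eq_abs, sq_abs, ← pow_mul]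

theorem IsPositiveDefinite.phase_add_eq_mul {ι : Type*} [Fintype ι] {α : ι → ℝ}
    (hpd : IsPositiveDefinite f) (hf0 : f 0 = 1) (hp : ∀ s, ‖p s‖ = 1)
    (hfp : ∀ s, f s = Real.exp (-(σ * s ^ 2)) • p s) (hα : ∀ j, |α j| < 1)
    (hsum : ∑ j, α j ^ 2 = 1) (hprod : ∀ s, p s = ∏ j, p (α j * s)) (s t : ℝ) :
    p (s + t) = p s * p t := by
  have hsub (l : ℝ) : ‖p (s * l + t * l) - p (s * l) * p (t * l)‖ ≤
      ∑ j, ‖p (s * (α j • l) + t * (α j • l)) - p (s * (α j • l)) * p (t * (α j • l))‖ := by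
    rw [hprod (s * l + t * l), hprod (s * l), hprod (t * l), ← Finset.prod_mul_distrib]
    simp only [smul_eq_mul, mul_left_comm s, mul_left_comm t, ← mul_add]
    exact norm_prod_sub_prod_le _ (fun j _ ↦ by simp [hp]) fun j _ ↦ by simp [hp]
  simpa [sub_eq_zero] using eq_zero_of_norm_le_sum_of_isLittleO hα hsum hsub
    (hpd.isLittleO_phase_add_sub_mul hf0 hp hfp s t) 1

end Phase

theorem exists_eq_circleExp_of_continuous_addChar {E : Type*} [AddCommGroup E] [Module ℝ E]
    [TopologicalSpace E] [IsTopologicalAddGroup E] [ContinuousSMul ℝ E] [LocallyConvexSpace ℝ E]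
    {χ : AddChar E Circle} (hχ : Continuous χ) :
    ∃ ℓ : E →L[ℝ] ℝ, ∀ s, χ s = Circle.exp (ℓ s) := by
  obtain ⟨F, ⟨hF0, hF⟩, -⟩ := Circle.isCoveringMap_exp.existsUnique_continuousMap_lifts
    ⟨χ, hχ⟩ 0 0 (by simp)
  have hexp (s : E) : Circle.exp (F s) = χ s := congrFun hF s
  have hadd : (fun q : E × E ↦ F (q.1 + q.2)) = fun q ↦ F q.1 + F q.2 :=
    Circle.isCoveringMap_exp.eq_of_comp_eq (by fun_prop) (by fun_prop)
      (by ext1 q; simp [hexp, Circle.exp_add, AddChar.map_add_eq_mul]) (0, 0) (by simp [hF0])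
  exact ⟨(AddMonoidHom.mk' F fun s t ↦ congrFun hadd (s, t)).toRealLinearMap F.continuous,
    fun s ↦ (hexp s).symm⟩

theorem exists_eq_exp_I_mul_of_map_add_eq_mul {p : ℝ → ℂ} (hcont : Continuous p)
    (hp : ∀ s, ‖p s‖ = 1) (hadd : ∀ s t, p (s + t) = p s * p t) :
    ∃ β : ℝ, ∀ s : ℝ, p s = Complex.exp (Complex.I * β * s) := by
  have hp0 : p 0 = 1 := by
    have hne : p 0 ≠ 0 := norm_ne_zero_iff.1 (by simp [hp])
    simpa [hne] using hadd 0 0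
  let χ : AddChar ℝ Circle :=
    { toFun s := ⟨p s, mem_sphere_zero_iff_norm.2 (hp s)⟩
      map_zero_eq_one' := Subtype.ext hp0
      map_add_eq_mul' s t := Subtype.ext (hadd s t) }
  obtain ⟨ℓ, hℓ⟩ := exists_eq_circleExp_of_continuous_addChar (χ := χ) (hcont.subtype_mk _)
  refine ⟨ℓ 1, fun s ↦ ?_⟩
  calc p s = Circle.exp (ℓ s) := congrArg Subtype.val (hℓ s)
    _ = Complex.exp (Complex.I * ℓ 1 * s) := by
      have hlin : ℓ s = s * ℓ 1 := by simpa using ℓ.map_smul s 1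
      rw [Circle.coe_exp, hlin]
      push_cast
      ring_nf

/-- Functional-equation form of the generalized Pólya theorem on the real line: the
normalized continuous positive definite solutions of `f(s) = ∏ⱼ f(αⱼ s)` are exactly
the characteristic functions `exp(-σ s² + iβ s)` of Gaussian distributions. -/
theorem generalized_polya_real_functional
    (n : ℕ) (hn : 2 ≤ n) (α : Fin n → ℝ) (hα0 : ∀ j, α j ≠ 0)
    (hsum : ∑ j, (α j) ^ 2 = 1)
    (f : ℝ → ℂ) (hcont : Continuous f) (hpd : IsPositiveDefinite f) (hf0 : f 0 = 1)
    (heq : ∀ s : ℝ, f s = ∏ j, f (α j * s)) :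
    ∃ (σ : ℝ) (β : ℝ), 0 ≤ σ ∧
      ∀ s : ℝ, f s = Complex.exp (-(σ : ℂ) * (s : ℂ) ^ 2 + Complex.I * (β : ℂ) * (s : ℂ)) := by
  have : Nontrivial (Fin n) := Fin.nontrivial_iff_two_le.2 hn
  have hα := abs_lt_one_of_sum_sq_eq_one hα0 hsum
  obtain ⟨σ, hσ, hnorm⟩ :=
    hpd.exists_norm_eq_exp_neg_mul_sq hα hsum hcont.continuousAt hf0 heq
  let p (s : ℝ) : ℂ := Real.exp (σ * s ^ 2) • f s
  have hp (s : ℝ) : ‖p s‖ = 1 := by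
    simp [p, -Complex.real_smul, norm_smul, hnorm, ← Real.exp_add]
  have hfp (s : ℝ) : f s = Real.exp (-(σ * s ^ 2)) • p s := by
    simp [p, -Complex.real_smul, smul_smul, ← Real.exp_add]
  have hprod (s : ℝ) : p s = ∏ j, p (α j * s) := by
    simp only [p, Finset.prod_smul, ← Real.exp_sum, ← heq, mul_pow, ← Finset.mul_sum,
      ← Finset.sum_mul, hsum, one_mul]
  obtain ⟨β, hβ⟩ := exists_eq_exp_I_mul_of_map_add_eq_mul (by fun_prop) hp
    (hpd.phase_add_eq_mul hf0 hp hfp hα hsum hprod)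
  refine ⟨σ, β, hσ, fun s ↦ ?_⟩
  rw [hfp, hβ, Complex.real_smul, Complex.exp_add]
  push_cast
  ring_nf
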